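/- arXiv:1802.01509 — 3 statements merged into one kernel-verified Lean document; each statement's English description precedes it below -/
import Mathlib

section
/- If G is a disconnected graph with connected components G_1,...,G_ℓ, then aw(G,k) = 1 + Σ_{i=1}^{ℓ} (aw(G_i,k) − 1). -/
namespace AntiVDW

/-- `v 0, v 1, …, v (k-1)` is a `k`-term arithmetic progression in `G`:
consecutive vertices are at a common finite distance `d`. -/
def IsAPSeq {V : Type*} (G : SimpleGraph V) (k : ℕ) (v : ℕ → V) : Prop :=
  ∃ d : ℕ, ∀ i, i + 1 < k → G.Reachable (v i) (v (i + 1)) ∧ G.dist (v i) (v (i + 1)) = d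

/-- `G` contains a `k`-AP that is rainbow under the coloring `c`. -/
def HasRainbowAP {V α : Type*} (G : SimpleGraph V) (k : ℕ) (c : V → α) : Prop :=
  ∃ v : ℕ → V, IsAPSeq G k v ∧ ∀ i j, i < k → j < k → i ≠ j → c (v i) ≠ c (v j)

/-- The anti-van der Waerden number: the least positive `r` such that every
exact (surjective) `r`-coloring of `G` contains a rainbow `k`-AP. -/
noncomputable def aw {V : Type*} (G : SimpleGraph V) (k : ℕ) : ℕ :=
  sInf {r : ℕ | 0 < r ∧ ∀ c : V → Fin r, Function.Surjective c → HasRainbowAP G k c}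

/-- Eccentricity of a vertex. -/
noncomputable def ecc {V : Type*} [Fintype V] (G : SimpleGraph V) (v : V) : ℕ :=
  Finset.univ.sup fun u => G.dist v u

/-- Radius of a graph. -/
noncomputable def rad {V : Type*} [Fintype V] [Nonempty V] (G : SimpleGraph V) : ℕ :=
  Finset.univ.inf' Finset.univ_nonempty (ecc G)

/-- Diameter of a graph. -/
noncomputable def diam {V : Type*} [Fintype V] (G : SimpleGraph V) : ℕ :=
  Finset.univ.sup (ecc G)

theorem aux_reach {V : Type*} (G : SimpleGraph V) (C : G.ConnectedComponent) (u v : C.supp)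
    (h : G.Reachable u v) :
    (G.induce C.supp).Reachable u v ∧ (G.induce C.supp).dist u v = G.dist u v := by
  classical
  have key : ∀ p : G.Walk u v, ∃ q : (G.induce C.supp).Walk u v, q.length = p.length := by
    intro p
    have hs : ∀ x ∈ p.support, x ∈ C.supp := by
      intro x hx
      have h1 : G.Reachable u x := ⟨p.takeUntil x hx⟩
      have h2 : G.connectedComponentMk u = C := u.2
      show G.connectedComponentMk x = C
      rw [← h2]
      exact SimpleGraph.ConnectedComponent.sound h1.symm
    refine ⟨p.induce C.supp hs, ?_⟩
    have h3 := congrArg SimpleGraph.Walk.length (SimpleGraph.Walk.map_induce p hs)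
    exact (SimpleGraph.Walk.length_map _ _).symm.trans h3
  obtain ⟨p, hp⟩ := h.exists_walk_length_eq_dist
  obtain ⟨q, hq⟩ := key p
  have hr : (G.induce C.supp).Reachable u v := ⟨q⟩
  refine ⟨hr, le_antisymm ?_ ?_⟩
  · rw [← hp, ← hq]
    exact SimpleGraph.dist_le q
  · obtain ⟨q', hq'⟩ := hr.exists_walk_length_eq_dist
    rw [← hq', ← SimpleGraph.Walk.length_map (SimpleGraph.Embedding.induce C.supp).toHom q']
    exact SimpleGraph.dist_le _

theorem aux_rainbow_lift {V α : Type*} (G : SimpleGraph V) (C : G.ConnectedComponent) (k : ℕ)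
    (c : V → α) (h : HasRainbowAP (G.induce C.supp) k (fun x => c x)) : HasRainbowAP G k c := by
  obtain ⟨v, ⟨d, hd⟩, hv⟩ := h
  refine ⟨fun i => v i, ⟨d, fun i hi => ?_⟩, hv⟩
  obtain ⟨h1, h2⟩ := hd i hi
  have h3 : G.Reachable (v i) (v (i + 1)) :=
    h1.map (SimpleGraph.Embedding.induce C.supp).toHom
  exact ⟨h3, by rw [← (aux_reach G C _ _ h3).2]; exact h2⟩

theorem aux_rainbow_restrict {V α : Type*} (G : SimpleGraph V) (k : ℕ)
    (c : V → α) (h : HasRainbowAP G k c) :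
    ∃ C : G.ConnectedComponent, HasRainbowAP (G.induce C.supp) k (fun x => c x) := by
  classical
  obtain ⟨v, ⟨d, hd⟩, hv⟩ := h
  set C := G.connectedComponentMk (v 0) with hC
  have h0 : v 0 ∈ C.supp := rfl
  have hm : ∀ i, i < k → v i ∈ C.supp := by
    intro i
    induction i with
    | zero => intro _; exact h0
    | succ n ih =>
      intro hn
      have h1 : G.connectedComponentMk (v n) = C := ih (by omega)
      show G.connectedComponentMk (v (n + 1)) = C
      rw [← h1]
      exact SimpleGraph.ConnectedComponent.sound (hd n hn).1.symm
  let w : ℕ → C.supp := fun i => if hi : v i ∈ C.supp then ⟨v i, hi⟩ else ⟨v 0, h0⟩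
  have hw : ∀ i, i < k → (w i : V) = v i := by
    intro i hi
    simp only [w, dif_pos (hm i hi)]
  refine ⟨C, w, ⟨d, fun i hi => ?_⟩, fun i j hi hj hij => ?_⟩
  · have h1 := hd i hi
    rw [← hw i (by omega), ← hw (i + 1) hi] at h1
    have h2 := aux_reach G C _ _ h1.1
    exact ⟨h2.1, h2.2.trans h1.2⟩
  · show c (w i) ≠ c (w j)
    rw [hw i hi, hw j hj]
    exact hv i j hi hj hij

theorem aux_mem {V : Type*} [Finite V] (G : SimpleGraph V) (k : ℕ) :
    0 < aw G k ∧ ∀ c : V → Fin (aw G k), Function.Surjective c → HasRainbowAP G k c := by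
  have hne : {r : ℕ | 0 < r ∧ ∀ c : V → Fin r, Function.Surjective c →
      HasRainbowAP G k c}.Nonempty := by
    refine ⟨Nat.card V + 1, Nat.succ_pos _, fun c hc => ?_⟩
    have := Nat.card_le_card_of_surjective c hc
    simp at this
  exact Nat.sInf_mem hne

theorem aux_lt {V α : Type*} [Finite V] (G : SimpleGraph V) (k : ℕ) (c : V → α)
    (h : ¬ HasRainbowAP G k c) : Nat.card (Set.range c) < aw G k := by
  by_contra! hle
  obtain ⟨hpos, hs⟩ := aux_mem G k
  have hf : ∃ f : Set.range c → Fin (aw G k), Function.Surjective f := by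
    have e := Finite.equivFin (Set.range c)
    refine ⟨fun x => if hx : (e x).1 < aw G k then ⟨(e x).1, hx⟩ else ⟨0, hpos⟩, fun y => ?_⟩
    obtain ⟨x, hx⟩ := e.surjective ⟨y.1, lt_of_lt_of_le y.2 hle⟩
    have hx' : (e x).1 = y.1 := congrArg Fin.val hx
    refine ⟨x, ?_⟩
    have hy : (e x).1 < aw G k := hx' ▸ y.2
    show (if hx : (e x).1 < aw G k then (⟨(e x).1, hx⟩ : Fin (aw G k)) else ⟨0, hpos⟩) = y
    rw [dif_pos hy]
    exact Fin.ext hx'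
  obtain ⟨f, hf⟩ := hf
  obtain ⟨v, hv, hr⟩ := hs (fun x => f ⟨c x, x, rfl⟩) (by
    intro y
    obtain ⟨⟨_, x, rfl⟩, hx⟩ := hf y
    exact ⟨x, hx⟩)
  refine h ⟨v, hv, fun i j hi hj hij he => hr i j hi hj hij ?_⟩
  simp only [he]

theorem aux_exists {V : Type*} [Finite V] [Nonempty V] (G : SimpleGraph V) (k : ℕ) (hk : 2 ≤ k) :
    ∃ c : V → Fin (aw G k - 1), Function.Surjective c ∧ ¬ HasRainbowAP G k c := by
  have h1 : 1 < aw G k := by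
    have h := aux_lt G k (fun _ : V => ()) (by
      rintro ⟨v, -, hr⟩
      exact hr 0 1 (by omega) (by omega) (by omega) rfl)
    have : 0 < Nat.card (Set.range (fun _ : V => ())) := Nat.card_pos
    omega
  by_contra! hc
  have : aw G k ≤ aw G k - 1 := Nat.sInf_le ⟨by omega, hc⟩
  omega

/-- If `G` is disconnected with connected components `G_i`, then
`aw(G,k) = 1 + Σ (aw(G_i,k) − 1)`. -/
theorem stmt_1 {V : Type*} [Fintype V] (G : SimpleGraph V)
    [Fintype G.ConnectedComponent]
    (hG : ¬ G.Connected) (k : ℕ) :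
    aw G k = 1 + ∑ C : G.ConnectedComponent, (aw (G.induce C.supp) k - 1) := by
  classical
  apply le_antisymm
  · apply Nat.sInf_le
    refine ⟨by omega, fun c hc => ?_⟩
    by_contra hr
    have h1 : ∀ C : G.ConnectedComponent,
        Nat.card (Set.range (fun x : C.supp => c x)) ≤ aw (G.induce C.supp) k - 1 := by
      intro C
      have := aux_lt (G.induce C.supp) k (fun x => c x)
        (fun h => hr (aux_rainbow_lift G C k c h))
      omega
    have h2 : Nat.card (Fin (1 + ∑ C : G.ConnectedComponent, (aw (G.induce C.supp) k - 1))) ≤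
        Nat.card (Σ C : G.ConnectedComponent, Set.range (fun x : C.supp => c x)) := by
      refine Nat.card_le_card_of_surjective (fun p => p.2.1) (fun y => ?_)
      obtain ⟨x, rfl⟩ := hc y
      exact ⟨⟨G.connectedComponentMk x, c x, ⟨x, rfl⟩, rfl⟩, rfl⟩
    rw [Nat.card_sigma, Nat.card_fin] at h2
    have h3 := Finset.sum_le_sum (fun C (_ : C ∈ Finset.univ) => h1 C)
    omega
  · have hne : ∀ C : G.ConnectedComponent, Nonempty C.supp := fun C => C.nonempty_supp.to_subtype
    by_cases hk : 2 ≤ k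
    · choose f hf hfr using fun C : G.ConnectedComponent =>
        haveI := hne C
        aux_exists (G.induce C.supp) k hk
      let c : V → Σ C : G.ConnectedComponent, Fin (aw (G.induce C.supp) k - 1) :=
        fun x => ⟨G.connectedComponentMk x, f _ ⟨x, rfl⟩⟩
      have hcC : ∀ (C : G.ConnectedComponent) (x : C.supp), c x = ⟨C, f C x⟩ := by
        rintro C ⟨x, hx⟩
        have hx' : G.connectedComponentMk x = C := hx
        subst hx'
        rfl
      have hs : Function.Surjective c := by
        rintro ⟨C, y⟩
        obtain ⟨x, rfl⟩ := hf C y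
        exact ⟨x, hcC C x⟩
      have h := aux_lt G k c (by
        intro h
        obtain ⟨C, v, hv, hr⟩ := aux_rainbow_restrict G k c h
        refine hfr C ⟨v, hv, fun i j hi hj hij he => hr i j hi hj hij ?_⟩
        show c (v i) = c (v j)
        rw [hcC, hcC, he])
      rw [hs.range_eq, Nat.card_congr (Equiv.Set.univ _), Nat.card_sigma] at h
      simp only [Nat.card_fin] at h
      omega
    · have h1 : ∀ C : G.ConnectedComponent, aw (G.induce C.supp) k - 1 = 0 := by
        intro C
        obtain ⟨x⟩ := hne C
        have : aw (G.induce C.supp) k ≤ 1 := Nat.sInf_le ⟨by omega, fun c _ =>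
          ⟨fun _ => x, ⟨0, fun i hi => by omega⟩, fun i j hi hj hij => by omega⟩⟩
        omega
      have := (aux_mem G k).1
      simp only [h1, Finset.sum_const_zero]
      omega

end AntiVDW
end

section
/- If T is a tree and c is a coloring of V(T) with no rainbow 3-AP, then there exists a path in T whose vertices receive all of the colors used by c. -/
namespace AntiVDW

/-- `z` lies on every walk from `x` to `y`. -/
def Btw {V : Type*} (T : SimpleGraph V) (x z y : V) : Prop :=
  ∀ p : T.Walk x y, z ∈ p.support

lemma Btw.symm {V : Type*} {T : SimpleGraph V} {x z y : V} (h : Btw T x z y) : Btw T y z x := by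
  intro p
  simpa using h p.reverse

lemma Btw.split {V : Type*} {T : SimpleGraph V} {x z y : V} (h : Btw T x z y) (u : V) :
    Btw T u z x ∨ Btw T u z y := by
  by_contra hc
  unfold Btw at hc
  push Not at hc
  obtain ⟨⟨p, hp⟩, q, hq⟩ := hc
  have := h (p.reverse.append q)
  rw [SimpleGraph.Walk.mem_support_append_iff] at this
  simp_all

lemma Btw.trans {V : Type*} {T : SimpleGraph V} {u z y w : V} (h : Btw T u z y)
    (h' : Btw T u y w) : Btw T u z w := by
  classical
  intro p
  exact p.support_takeUntil_subset_support (h' p) (h _)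

lemma Btw.dist_lt {V : Type*} {T : SimpleGraph V} (hT : T.IsTree) {u z y : V} (h : Btw T u z y)
    (hne : y ≠ z) : T.dist u z < T.dist u y := by
  classical
  obtain ⟨p, hp⟩ := hT.connected.exists_walk_length_eq_dist u y
  rw [← hp]
  exact lt_of_le_of_lt (SimpleGraph.dist_le (p.takeUntil z (h p)))
    (p.length_takeUntil_lt_length (h p) hne.symm)

lemma btw_of_path {V : Type*} {T : SimpleGraph V} (hT : T.IsTree) {u z y : V}
    (p : T.Walk u y) (hp : p.IsPath) (hz : z ∈ p.support) : Btw T u z y := by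
  classical
  intro q
  have := (hT.existsUnique_path u y).unique hp q.bypass_isPath
  subst this
  exact q.support_bypass_subset_support hz

lemma exists_mid {V : Type*} {T : SimpleGraph V} (hT : T.IsTree) {x y : V} (hxy : x ≠ y)
    (he : Even (T.dist x y)) :
    ∃ m, Btw T x m y ∧ m ≠ x ∧ m ≠ y ∧ T.dist x m = T.dist m y := by
  obtain ⟨p, hp, hl⟩ := hT.connected.exists_path_of_dist x y
  obtain ⟨k, hk⟩ := he
  have hpos : 0 < T.dist x y := hT.connected.pos_dist_of_ne hxy
  have h1 : T.dist x (p.getVert k) ≤ k := by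
    refine (SimpleGraph.dist_le (p.take k)).trans ?_
    rw [SimpleGraph.Walk.take_length]; omega
  have h2 : T.dist (p.getVert k) y ≤ k := by
    refine (SimpleGraph.dist_le (p.drop k)).trans ?_
    rw [SimpleGraph.Walk.drop_length]; omega
  have h3 := hT.connected.dist_triangle (u := x) (v := p.getVert k) (w := y)
  refine ⟨p.getVert k, btw_of_path hT p hp (p.getVert_mem_support k), ?_, ?_, by omega⟩
  · intro h
    rw [h, SimpleGraph.dist_self] at h1
    rw [h] at h2
    omega
  · intro h
    rw [h, SimpleGraph.dist_self] at h2
    rw [h] at h1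
    omega

lemma exists_even {V : Type*} {T : SimpleGraph V} (hT : T.IsTree) (x y z : V) :
    Even (T.dist x y) ∨ Even (T.dist y z) ∨ Even (T.dist x z) := by
  let f : T.Coloring Bool := hT.colorable_two.toColoring (by simp)
  have key : ∀ a b, Even (T.dist a b) ↔ (f a ↔ f b) := by
    intro a b
    obtain ⟨p, hp⟩ := hT.connected.exists_walk_length_eq_dist a b
    rw [← hp]
    exact f.even_length_iff_congr p
  rw [key, key, key]
  tauto

/-- In any coloring of a finite tree with no rainbow 3-AP, there is a path
containing all of the colors. -/
theorem stmt_5 {V α : Type*} [Fintype V] (T : SimpleGraph V) (hT : T.IsTree)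
    (c : V → α) (h : ¬ HasRainbowAP T 3 c) :
    ∃ (u w : V) (p : T.Walk u w), p.IsPath ∧ ∀ x : V, ∃ y ∈ p.support, c y = c x := by
  classical
  let P : Finset V → Prop := fun S =>
    (∀ x ∈ S, ∀ y ∈ S, ∀ z, Btw T x z y → z ∈ S) ∧ ∀ x, ∃ y ∈ S, c y = c x
  have hex : ∃ S, P S := ⟨Finset.univ, by simp, fun x => ⟨x, by simp⟩⟩
  obtain ⟨S, hS⟩ := exists_minimal_of_wellFoundedLT P hex
  obtain ⟨⟨hconv, hcov⟩, hmin⟩ := hS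
  -- leaves have unique colors
  have leaf : ∀ z ∈ S, (∀ x ∈ S, ∀ y ∈ S, x ≠ z → y ≠ z → ¬ Btw T x z y) →
      ∀ y ∈ S, y ≠ z → c y ≠ c z := by
    intro z hz hl y hy hyz hc
    have hP : P (S.erase z) := by
      refine ⟨?_, ?_⟩
      · intro a ha b hb v hv
        rw [Finset.mem_erase] at *
        refine ⟨?_, hconv a ha.2 b hb.2 v hv⟩
        rintro rfl
        exact hl a ha.2 b hb.2 ha.1 hb.1 hv
      · intro a
        obtain ⟨b, hb, hbc⟩ := hcov a
        by_cases hbz : b = z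
        · exact ⟨y, by simp [hy, hyz], by rw [hc, ← hbz, hbc]⟩
        · exact ⟨b, by simp [hb, hbz], hbc⟩
    have := hmin hP (Finset.erase_subset _ _) hz
    simp at this
  have hne : S.Nonempty := by
    obtain ⟨r⟩ := hT.connected.nonempty
    obtain ⟨y, hy, -⟩ := hcov r
    exact ⟨y, hy⟩
  have far : ∀ r z, z ∈ S → (∀ x ∈ S, T.dist r x ≤ T.dist r z) →
      ∀ y ∈ S, y ≠ z → c y ≠ c z := by
    intro r z hz hm
    apply leaf z hz
    intro x hx y hy hxz hyz hb
    rcases hb.split r with h1 | h1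
    · exact absurd (h1.dist_lt hT hxz) (not_lt.2 (hm x hx))
    · exact absurd (h1.dist_lt hT hyz) (not_lt.2 (hm y hy))
  obtain ⟨r, hr⟩ := hne
  obtain ⟨u, hu, hum⟩ := Finset.exists_max_image S (fun x => T.dist r x) ⟨r, hr⟩
  obtain ⟨w, hw, hwm⟩ := Finset.exists_max_image S (fun x => T.dist u x) ⟨r, hr⟩
  have lu := far r u hu hum
  have lw := far u w hw hwm
  -- no two distinct leaves at even distance
  have noeven : ∀ x ∈ S, ∀ y ∈ S, x ≠ y → (∀ v ∈ S, v ≠ x → c v ≠ c x) →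
      (∀ v ∈ S, v ≠ y → c v ≠ c y) → ¬ Even (T.dist x y) := by
    intro x hx y hy hxy lx ly he
    obtain ⟨m, hb, hmx, hmy, hd⟩ := exists_mid hT hxy he
    have hm := hconv x hx y hy m hb
    have h1 := lx m hm hmx
    have h2 := ly m hm hmy
    have h3 := ly x hx hxy
    apply h
    refine ⟨fun i => if i = 0 then x else if i = 1 then m else y, ⟨T.dist x m, ?_⟩, ?_⟩
    · intro i hi
      have : i = 0 ∨ i = 1 := by omega
      rcases this with rfl | rfl
      · exact ⟨hT.connected _ _, by simp⟩
      · exact ⟨hT.connected _ _, by simp [hd]⟩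
    · intro i j hi hj hij
      clear hmin leaf far lu lw lx ly hconv hcov hum hwm h
      have h1' := h1.symm
      have h2' := h2.symm
      have h3' := h3.symm
      interval_cases i <;> interval_cases j <;> first | exact absurd rfl hij | simpa
  have hall : ∀ z ∈ S, Btw T u z w := by
    by_contra hc
    push Not at hc
    obtain ⟨z0, hz0, hz0b⟩ := hc
    obtain ⟨z, hz, hzm⟩ := Finset.exists_max_image (S.filter fun z => ¬ Btw T u z w)
      (fun x => T.dist u x) ⟨z0, by simp [hz0, hz0b]⟩
    rw [Finset.mem_filter] at hz
    obtain ⟨hz, hzb⟩ := hz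
    have side : ∀ y ∈ S, y ≠ z → ¬ Btw T u z y := by
      intro y hy hyz hb
      by_cases hyb : Btw T u y w
      · exact hzb (hb.trans hyb)
      · have := hzm y (by simp [hy, hyb])
        exact absurd (hb.dist_lt hT hyz) (not_lt.2 this)
    have lz := leaf z hz (by
      intro x hx y hy hxz hyz hb
      rcases hb.split u with h1 | h1
      · exact side x hx hxz h1
      · exact side y hy hyz h1)
    have hzu : u ≠ z := by
      rintro rfl
      exact hzb fun p => p.start_mem_support
    have hzw : w ≠ z := by
      rintro rfl
      exact hzb fun p => p.end_mem_support
    have huw : u ≠ w := by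
      rintro rfl
      have h1 := hwm z hz
      have h2 := hT.connected.pos_dist_of_ne hzu
      rw [SimpleGraph.dist_self] at h1
      omega
    rcases exists_even hT u w z with he | he | he
    · exact noeven u hu w hw huw lu lw he
    · exact noeven w hw z hz hzw lw lz he
    · exact noeven u hu z hz hzu lu lz he
  obtain ⟨p, hp, -⟩ := hT.existsUnique_path u w
  refine ⟨u, w, p, hp, fun x => ?_⟩
  obtain ⟨y, hy, hyc⟩ := hcov x
  exact ⟨y, hall y hy p, hyc⟩

end AntiVDW
end

section
/- If T is a tree with no bijacent vertices, then aw(T,3) ≤ 4. -/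
namespace AntiVDW

/-- A bijacent vertex: a degree-2 vertex whose two neighbors also have degree 2. -/
def Bijacent {V : Type*} [Fintype V] (G : SimpleGraph V) [DecidableRel G.Adj] (v : V) : Prop :=
  G.degree v = 2 ∧ ∀ u ∈ G.neighborFinset v, G.degree u = 2


/-- `Q` restricted to `0..M` is a geodesic. -/
def Geo {V : Type*} (T : SimpleGraph V) (Q : ℕ → V) (M : ℕ) : Prop :=
  ∀ i j, i ≤ j → j ≤ M → T.dist (Q i) (Q j) = j - i

theorem exists_geo {V : Type*} {T : SimpleGraph V} (hT : T.IsTree) (u v : V) :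
    ∃ Q : ℕ → V, Q 0 = u ∧ Q (T.dist u v) = v ∧ Geo T Q (T.dist u v) := by
  obtain ⟨p, hp⟩ := hT.connected.exists_walk_length_eq_dist u v
  have hstep : ∀ k i, i + k ≤ T.dist u v → T.dist (p.getVert i) (p.getVert (i + k)) ≤ k := by
    intro k
    induction k with
    | zero => intro i _; simp
    | succ k ih =>
      intro i hi
      have h1 := ih i (by omega)
      have h2 : T.Adj (p.getVert (i + k)) (p.getVert (i + k + 1)) :=
        p.adj_getVert_succ (by omega)
      have h3 := SimpleGraph.dist_eq_one_iff_adj.2 h2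
      have h4 := hT.connected.dist_triangle (u := p.getVert i) (v := p.getVert (i + k))
        (w := p.getVert (i + k + 1))
      rw [← add_assoc]; omega
  have hend : p.getVert (T.dist u v) = v := by rw [← hp]; exact p.getVert_length
  refine ⟨p.getVert, p.getVert_zero, hend, ?_⟩
  intro i j hij hj
  have a1 := hstep i 0 (by omega)
  have a2 := hstep (j - i) i (by omega)
  have a3 := hstep (T.dist u v - j) j (by omega)
  rw [show i + (j - i) = j by omega] at a2
  rw [show j + (T.dist u v - j) = T.dist u v by omega, hend] at a3
  rw [show 0 + i = i by omega, p.getVert_zero] at a1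
  have b1 := hT.connected.dist_triangle (u := u) (v := p.getVert i) (w := v)
  have b2 := hT.connected.dist_triangle (u := p.getVert i) (v := p.getVert j) (w := v)
  omega

theorem btw_unique {V : Type*} {T : SimpleGraph V} (hT : T.IsTree) {u v p p' : V}
    (h : T.dist u p + T.dist p v = T.dist u v) (h' : T.dist u p' + T.dist p' v = T.dist u v)
    (he : T.dist u p = T.dist u p') : p = p' := by
  obtain ⟨a, ha⟩ := hT.connected.exists_walk_length_eq_dist u p
  obtain ⟨b, hb⟩ := hT.connected.exists_walk_length_eq_dist p v
  obtain ⟨a', ha'⟩ := hT.connected.exists_walk_length_eq_dist u p'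
  obtain ⟨b', hb'⟩ := hT.connected.exists_walk_length_eq_dist p' v
  have h1 : (a.append b).IsPath := SimpleGraph.Walk.isPath_of_length_eq_dist _ (by
    rw [SimpleGraph.Walk.length_append]; omega)
  have h2 : (a'.append b').IsPath := SimpleGraph.Walk.isPath_of_length_eq_dist _ (by
    rw [SimpleGraph.Walk.length_append]; omega)
  have h3 := (hT.existsUnique_path u v).unique h1 h2
  have h4 : (a.append b).getVert (T.dist u p) = p := by
    rw [SimpleGraph.Walk.getVert_append, if_neg (by omega), ha]; simp
  have h5 : (a'.append b').getVert (T.dist u p) = p' := by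
    rw [SimpleGraph.Walk.getVert_append, if_neg (by omega), ha', he]; simp
  rw [← h4, ← h5, h3]

theorem closer_unique {V : Type*} {T : SimpleGraph V} (hT : T.IsTree) {p q q' w : V}
    (hq : T.dist p q = 1) (hq' : T.dist p q' = 1)
    (h : T.dist q w + 1 = T.dist p w) (h' : T.dist q' w + 1 = T.dist p w) : q = q' :=
  btw_unique hT (u := p) (v := w) (by omega) (by omega) (by omega)

theorem dist_pm {V : Type*} {T : SimpleGraph V} (hT : T.IsTree) {p q : V} (w : V)
    (hq : T.dist p q = 1) : T.dist q w + 1 = T.dist p w ∨ T.dist q w = T.dist p w + 1 := by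
  have := hT.dist_eq_dist_add_one_of_adj w (SimpleGraph.dist_eq_one_iff_adj.1 hq)
  rw [T.dist_comm (u := q), T.dist_comm (u := p) (v := w)]
  omega

theorem exists_median {V : Type*} {T : SimpleGraph V} (hT : T.IsTree) (u v w : V) :
    ∃ m, T.dist u m + T.dist m v = T.dist u v ∧ T.dist u m + T.dist m w = T.dist u w ∧
      T.dist v m + T.dist m w = T.dist v w := by
  obtain ⟨Q, h0, hN, hQ⟩ := exists_geo hT u v
  obtain ⟨i, hi, hmin⟩ := Finset.exists_min_image (Finset.range (T.dist u v + 1))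
    (fun i => T.dist (Q i) w) ⟨0, by simp⟩
  simp only [Finset.mem_range] at hi hmin
  have hL : ∀ k, k ≤ i → T.dist (Q (i - k)) w = k + T.dist (Q i) w := by
    intro k
    induction k using Nat.strong_induction_on with
    | _ k ih =>
      intro hk
      rcases k with _ | k
      · simp
      have e1 := ih k (by omega) (by omega)
      have a1 := hQ (i - (k+1)) (i - k) (by omega) (by omega)
      rw [T.dist_comm] at a1
      rcases dist_pm hT w (p := Q (i-k)) (q := Q (i - (k+1))) (by omega) with hh | hh
      · exfalso
        rcases k with _ | k
        · have := hmin (i - 1) (by omega)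
          simp at hh e1; omega
        · have e2 := ih k (by omega) (by omega)
          have a2 := hQ (i - (k+1)) (i - k) (by omega) (by omega)
          have := closer_unique hT (p := Q (i - (k+1))) (q := Q (i - (k+1+1))) (q' := Q (i-k)) (w := w)
            (by omega) (by omega) (by omega) (by omega)
          have a3 := hQ (i - (k+1+1)) (i - k) (by omega) (by omega)
          rw [this, T.dist_self] at a3
          omega
      · omega
  have hR : ∀ k, i + k ≤ T.dist u v → T.dist (Q (i + k)) w = k + T.dist (Q i) w := by
    intro k
    induction k using Nat.strong_induction_on with
    | _ k ih =>
      intro hk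
      rcases k with _ | k
      · simp
      have e1 := ih k (by omega) (by omega)
      have a1 := hQ (i + k) (i + (k+1)) (by omega) (by omega)
      rcases dist_pm hT w (p := Q (i+k)) (q := Q (i + (k+1))) (by omega) with hh | hh
      · exfalso
        rcases k with _ | k
        · have := hmin (i + 1) (by omega)
          simp at hh e1; omega
        · have e2 := ih k (by omega) (by omega)
          have a2 := hQ (i + k) (i + (k+1)) (by omega) (by omega)
          rw [T.dist_comm] at a2
          have := closer_unique hT (p := Q (i + (k+1))) (q := Q (i + (k+1+1))) (q' := Q (i+k)) (w := w)
            (by omega) (by omega) (by omega) (by omega)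
          have a3 := hQ (i + k) (i + (k+1+1)) (by omega) (by omega)
          rw [this, T.dist_self] at a3
          omega
      · omega
  have l := hL i le_rfl
  have r := hR (T.dist u v - i) (by omega)
  rw [Nat.sub_self, h0] at l
  rw [show i + (T.dist u v - i) = T.dist u v by omega, hN] at r
  have d1 := hQ 0 i (by omega) (by omega)
  have d2 := hQ i (T.dist u v) (by omega) (by omega)
  rw [h0] at d1
  rw [hN] at d2
  refine ⟨Q i, by omega, by omega, ?_⟩
  rw [T.dist_comm (u := v)]; omega

theorem leaf_dist {V : Type*} {T : SimpleGraph V} (hT : T.IsTree) {Q : ℕ → V} {M : ℕ}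
    (hQ : Geo T Q M) {i : ℕ} (hi0 : 0 < i) (hi : i < M) {q : V} (hq : T.Adj (Q i) q)
    (h1 : q ≠ Q (i - 1)) (h2 : q ≠ Q (i + 1)) (j : ℕ) (hj : j ≤ M) :
    T.dist q (Q j) = (i - j) + (j - i) + 1 := by
  have hq1 := SimpleGraph.dist_eq_one_iff_adj.2 hq
  have n1 := hQ (i-1) i (by omega) (by omega)
  have n2 := hQ i (i+1) (by omega) (by omega)
  rw [T.dist_comm] at n1
  rcases lt_trichotomy j i with hlt | rfl | hlt
  · have a := hQ j i (by omega) (by omega)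
    have b := hQ j (i-1) (by omega) (by omega)
    rw [T.dist_comm] at a b
    rcases dist_pm hT (Q j) hq1 with hh | hh
    · exact absurd (closer_unique hT hq1 (by omega) hh (by omega)) h1
    · omega
  · rw [T.dist_comm]; omega
  · have a := hQ i j (by omega) (by omega)
    have b := hQ (i+1) j (by omega) (by omega)
    rcases dist_pm hT (Q j) hq1 with hh | hh
    · exact absurd (closer_unique hT hq1 (by omega) hh (by omega)) h2
    · omega

/-- No rainbow 3-AP, stated for triples. -/
def NR {V α : Type*} (T : SimpleGraph V) (c : V → α) : Prop :=
  ∀ u v w, T.dist u v = T.dist v w → c u = c v ∨ c v = c w ∨ c u = c w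

theorem degree_two {V : Type*} [Fintype V] {T : SimpleGraph V} [DecidableRel T.Adj]
    {Q : ℕ → V} {M : ℕ} (hQ : Geo T Q M) {i : ℕ} (hi0 : 0 < i) (hi : i < M)
    (h : ∀ q, T.Adj (Q i) q → q ≠ Q (i - 1) → q ≠ Q (i + 1) → False) :
    T.degree (Q i) = 2 ∧ T.neighborFinset (Q i) ⊆
      (by classical exact ({Q (i-1), Q (i+1)} : Finset V)) := by
  classical
  have n1 := hQ (i-1) i (by omega) (by omega)
  have n2 := hQ i (i+1) (by omega) (by omega)
  have n3 := hQ (i-1) (i+1) (by omega) (by omega)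
  rw [T.dist_comm] at n1
  have e : T.neighborFinset (Q i) = {Q (i-1), Q (i+1)} := by
    ext q
    simp only [SimpleGraph.mem_neighborFinset, Finset.mem_insert, Finset.mem_singleton]
    constructor
    · intro ha
      by_contra hc
      push Not at hc
      exact h q ha hc.1 hc.2
    · rintro (rfl | rfl)
      · exact SimpleGraph.dist_eq_one_iff_adj.1 (by omega)
      · exact SimpleGraph.dist_eq_one_iff_adj.1 (by omega)
  have hne : Q (i-1) ≠ Q (i+1) := by
    intro hh
    rw [hh, T.dist_self] at n3
    omega
  refine ⟨?_, ?_⟩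
  · rw [← SimpleGraph.card_neighborFinset_eq_degree, e, Finset.card_pair hne]
  · rw [e]

theorem finale {V α : Type*} [Fintype V] {T : SimpleGraph V} [DecidableRel T.Adj]
    (hT : T.IsTree) {c : V → α} (hc : NR T c) {Q : ℕ → V} {M : ℕ} (hQ : Geo T Q M)
    {n k : ℕ} (hn : 3 ≤ n) (hk : n + 1 = 2 * k) (hM : 2 * n < M) {A B C D : α}
    (hAB : A ≠ B) (hAC : A ≠ C) (hAD : A ≠ D) (hBC : B ≠ C) (hBD : B ≠ D) (hCD : C ≠ D)
    (f0 : c (Q 0) = C) (fi : ∀ i, 0 < i → i < n → c (Q i) = B) (fn : c (Q n) = A)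
    (f2n : c (Q (2 * n)) = A) (fM : c (Q M) = D) : Bijacent T (Q n) := by
  have dQ : ∀ i j, i ≤ M → j ≤ M → T.dist (Q i) (Q j) = (i - j) + (j - i) := by
    intro i j hi hj
    rcases le_total i j with h | h
    · rw [hQ i j h hj]; omega
    · rw [T.dist_comm, hQ j i h hi]; omega
  have ctr : ∀ i j l, i ≤ M → j ≤ M → l ≤ M → i + l = 2 * j →
      c (Q i) = c (Q j) ∨ c (Q j) = c (Q l) ∨ c (Q i) = c (Q l) := by
    intro i j l hi hj hl h
    apply hc
    rw [dQ i j hi hj, dQ j l hj hl]; omega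
  -- colour of position n+1
  have fn1 : c (Q (n+1)) = B := by
    have h1 := ctr 0 k (n+1) (by omega) (by omega) (by omega) (by omega)
    have h2 := ctr (n-1) n (n+1) (by omega) (by omega) (by omega) (by omega)
    rw [f0, fi k (by omega) (by omega)] at h1
    rw [fi (n-1) (by omega) (by omega), fn] at h2
    grind
  have f2n2 : c (Q (2*n-2)) = B := by
    have h1 := ctr 0 (n-1) (2*n-2) (by omega) (by omega) (by omega) (by omega)
    have h2 := ctr 2 n (2*n-2) (by omega) (by omega) (by omega) (by omega)
    rw [f0, fi (n-1) (by omega) (by omega)] at h1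
    rw [fi 2 (by omega) (by omega), fn] at h2
    grind
  have g0 : ∀ q, T.Adj (Q n) q → q ≠ Q (n - 1) → q ≠ Q (n + 1) → False := by
    intro q hq hq1 hq2
    have ld := leaf_dist hT hQ (by omega) (by omega) hq hq1 hq2
    have h1 := hc (Q (n-1)) (Q n) q (by
      rw [dQ _ _ (by omega) (by omega), T.dist_comm, ld _ (by omega)]; omega)
    have h2 := hc (Q 0) (Q k) q (by
      rw [dQ _ _ (by omega) (by omega), T.dist_comm, ld _ (by omega)]; omega)
    have h3 := hc (Q 0) q (Q (2*n)) (by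
      rw [T.dist_comm, ld _ (by omega), ld _ (by omega)]; omega)
    rw [fi (n-1) (by omega) (by omega), fn] at h1
    rw [fi k (by omega) (by omega), f0] at h2
    rw [f0, f2n] at h3
    grind
  have gm : ∀ q, T.Adj (Q (n-1)) q → q ≠ Q (n - 1 - 1) → q ≠ Q (n - 1 + 1) → False := by
    intro q hq hq1 hq2
    have ld := leaf_dist hT hQ (by omega) (by omega) hq hq1 hq2
    have h1 := hc (Q n) (Q 0) q (by
      rw [dQ _ _ (by omega) (by omega), T.dist_comm, ld _ (by omega)]; omega)
    have h2 := hc (Q n) (Q (n-1)) q (by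
      rw [dQ _ _ (by omega) (by omega), T.dist_comm, ld _ (by omega)]; omega)
    have h3 := hc (Q (n-2)) (Q M) q (by
      rw [dQ _ _ (by omega) (by omega), T.dist_comm, ld _ (by omega)]; omega)
    rw [fn, f0] at h1
    rw [fi (n-1) (by omega) (by omega), fn] at h2
    rw [fi (n-2) (by omega) (by omega), fM] at h3
    grind
  have gp : ∀ q, T.Adj (Q (n+1)) q → q ≠ Q (n + 1 - 1) → q ≠ Q (n + 1 + 1) → False := by
    intro q hq hq1 hq2
    have ld := leaf_dist hT hQ (by omega) (by omega) hq hq1 hq2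
    have h1 := hc (Q n) (Q M) q (by
      rw [dQ _ _ (by omega) (by omega), T.dist_comm, ld _ (by omega)]; omega)
    have h2 := hc (Q n) (Q (n+1)) q (by
      rw [dQ _ _ (by omega) (by omega), T.dist_comm, ld _ (by omega)]; omega)
    rw [fn, fM] at h1
    rw [fn, fn1] at h2
    have hqA : c q = A := by grind
    by_cases hM2 : M = 2 * n + 1
    · have h3 := hc (Q 1) q (Q M) (by
        rw [T.dist_comm, ld _ (by omega), ld _ (by omega)]; omega)
      rw [fi 1 (by omega) (by omega), fM, hqA] at h3
      grind
    · have h3 := hc (Q 0) q (Q (2*n+2)) (by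
        rw [T.dist_comm, ld _ (by omega), ld _ (by omega)]; omega)
      have h4 := ctr 0 (n+1) (2*n+2) (by omega) (by omega) (by omega) (by omega)
      have h5 := ctr (2*n-2) (2*n) (2*n+2) (by omega) (by omega) (by omega) (by omega)
      rw [f0, hqA] at h3
      rw [f0, fn1] at h4
      rw [f2n2, f2n] at h5
      grind
  have r0 := degree_two hQ (by omega) (by omega) g0
  have rm := degree_two hQ (by omega) (by omega) gm
  have rp := degree_two hQ (by omega) (by omega) gp
  refine ⟨r0.1, ?_⟩
  intro u hu
  have := r0.2 hu
  simp only [Finset.mem_insert, Finset.mem_singleton] at this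
  rcases this with rfl | rfl
  · exact rm.1
  · exact rp.1

/-- `(u, m, v)` is a three-coloured path. -/
def Tri {V α : Type*} (T : SimpleGraph V) (c : V → α) (u m v : V) : Prop :=
  T.dist u m + T.dist m v = T.dist u v ∧ c u ≠ c m ∧ c m ≠ c v ∧ c u ≠ c v

theorem Tri.symm {V α : Type*} {T : SimpleGraph V} {c : V → α} {u m v : V}
    (h : Tri T c u m v) : Tri T c v m u := by
  obtain ⟨h1, h2, h3, h4⟩ := h
  refine ⟨?_, h3.symm, h2.symm, h4.symm⟩
  rw [T.dist_comm (u := v) (v := m), T.dist_comm (u := m) (v := u), T.dist_comm (u := v) (v := u)]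
  omega

theorem Geo.tri {V α : Type*} {T : SimpleGraph V} {c : V → α} {Q : ℕ → V} {M : ℕ}
    (hQ : Geo T Q M) {n : ℕ} (hmin : ∀ u m v, Tri T c u m v → n ≤ T.dist u v)
    {i j k : ℕ} (hij : i ≤ j) (hjk : j ≤ k) (hk : k ≤ M) (hlt : k < i + n) :
    c (Q i) = c (Q j) ∨ c (Q j) = c (Q k) ∨ c (Q i) = c (Q k) := by
  by_contra hcon
  push Not at hcon
  have a := hQ i j hij (by omega)
  have b := hQ j k hjk (by omega)
  have d := hQ i k (by omega) (by omega)
  have := hmin (Q i) (Q j) (Q k) ⟨by omega, hcon.1, hcon.2.1, hcon.2.2⟩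
  omega

theorem interior {V α : Type*} {T : SimpleGraph V} (hT : T.IsTree) {c : V → α} {n : ℕ}
    (hmin : ∀ u m v, Tri T c u m v → n ≤ T.dist u v) {x m y : V} (h : Tri T c x m y)
    (hn : T.dist x y = n) {p : V} (hp : T.dist x p + T.dist p y = n)
    (h1 : 0 < T.dist x p) (h2 : T.dist x p < n) : c p = c m := by
  obtain ⟨Q, q0, qN, hQ⟩ := exists_geo hT x y
  rw [hn] at hQ qN
  have loc : ∀ p, T.dist x p + T.dist p y = n → Q (T.dist x p) = p := by
    intro p hp
    have a := hQ 0 (T.dist x p) (by omega) (by omega)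
    have b := hQ (T.dist x p) n (by omega) (by omega)
    rw [q0] at a
    rw [qN] at b
    exact btw_unique hT (u := x) (v := y) (by omega) (by omega) (by omega)
  obtain ⟨t1, t2, t3, t4⟩ := h
  have hm := loc m (by omega)
  have hpp := loc p hp
  have mpos : 0 < T.dist x m := hT.connected.pos_dist_of_ne (fun e => t2 (by rw [e]))
  have mpos' : 0 < T.dist m y := hT.connected.pos_dist_of_ne (fun e => t3 (by rw [e]))
  rcases le_total (T.dist x p) (T.dist x m) with hle | hle
  · have a := hQ.tri hmin (c := c) (i := 0) (j := T.dist x p) (k := T.dist x m)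
      (by omega) hle (by omega) (by omega)
    have b := hQ.tri hmin (c := c) (i := T.dist x p) (j := T.dist x m) (k := n)
      (by omega) (by omega) (by omega) (by omega)
    rw [q0, hm, hpp] at a
    rw [qN, hm, hpp] at b
    grind
  · have a := hQ.tri hmin (c := c) (i := 0) (j := T.dist x m) (k := T.dist x p)
      (by omega) hle (by omega) (by omega)
    have b := hQ.tri hmin (c := c) (i := T.dist x m) (j := T.dist x p) (k := n)
      (by omega) (by omega) (by omega) (by omega)
    rw [q0, hm, hpp] at a
    rw [qN, hm, hpp] at b
    grind

/-- A fourth colour never branches off from the inside of a minimal strip. -/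
theorem no_branch {V α : Type*} {T : SimpleGraph V} (hT : T.IsTree) {c : V → α} (hc : NR T c)
    {n : ℕ} (hmin : ∀ u m v, Tri T c u m v → n ≤ T.dist u v) {x m y : V} (h : Tri T c x m y)
    (hn : T.dist x y = n) {z : V} (zx : c z ≠ c x) (zm : c z ≠ c m) (zy : c z ≠ c y) :
    T.dist x z = n + T.dist y z ∨ T.dist y z = n + T.dist x z := by
  obtain ⟨o, o1, o2, o3⟩ := exists_median hT x y z
  have yo := T.dist_comm (u := y) (v := o)
  by_cases e0 : T.dist x o = 0
  · right; omega
  by_cases e1 : T.dist x o = n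
  · left; omega
  exfalso
  have co : c o = c m := interior hT hmin h hn (by omega) (by omega) (by omega)
  obtain ⟨t1, t2, t3, t4⟩ := h
  have hz1 := hmin x o z ⟨o2, by rw [co]; exact t2, by rw [co]; exact zm.symm, zx.symm⟩
  have hz2 := hmin y o z ⟨o3, by rw [co]; exact t3.symm, by rw [co]; exact zm.symm, zy.symm⟩
  obtain ⟨R, r0, rN, hR⟩ := exists_geo hT o z
  have ray : ∀ i, i ≤ T.dist o z → T.dist o (R i) = i ∧ T.dist x (R i) = T.dist x o + i ∧
      T.dist y (R i) = T.dist y o + i := by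
    intro i hi
    have a := hR 0 i (by omega) hi
    have b := hR i (T.dist o z) hi le_rfl
    rw [r0] at a
    rw [rN] at b
    have u1 := hT.connected.dist_triangle (u := x) (v := o) (w := R i)
    have u2 := hT.connected.dist_triangle (u := y) (v := o) (w := R i)
    have u3 := hT.connected.dist_triangle (u := x) (v := R i) (w := z)
    have u4 := hT.connected.dist_triangle (u := y) (v := R i) (w := z)
    omega
  have w1 := ray (n - T.dist x o) (by omega)
  have w2 := ray (T.dist x o) (by omega)
  have yx := T.dist_comm (u := y) (v := x)
  have k1 := hc y x (R (n - T.dist x o)) (by omega)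
  have k2 := hc y o (R (n - T.dist x o)) (by omega)
  have k3 := hc x y (R (T.dist x o)) (by omega)
  have k4 := hc x o (R (T.dist x o)) (by omega)
  rw [co] at k2 k4
  have c1 : c (R (n - T.dist x o)) = c y := by grind
  have c2 : c (R (T.dist x o)) = c x := by grind
  rcases le_total (n - T.dist x o) (T.dist x o) with hle | hle
  · have := hR.tri hmin (c := c) (i := 0) (Nat.zero_le _) hle (by omega) (by omega)
    rw [r0, co, c1, c2] at this
    grind
  · have := hR.tri hmin (c := c) (i := 0) (Nat.zero_le _) hle (by omega) (by omega)
    rw [r0, co, c1, c2] at this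
    grind

theorem main_nr {V α : Type*} [Fintype V] {T : SimpleGraph V} [DecidableRel T.Adj]
    (hT : T.IsTree) (hb : ∀ v : V, ¬ Bijacent T v) {c : V → α} (hc : NR T c)
    (h3 : ∃ u v w, c u ≠ c v ∧ c v ≠ c w ∧ c u ≠ c w)
    (h4 : ∀ A B C : α, ∃ z, c z ≠ A ∧ c z ≠ B ∧ c z ≠ C) : False := by
  classical
  have ex : ∃ n, ∃ u m v, Tri T c u m v ∧ T.dist u v = n := by
    obtain ⟨u, v, w, uv, vw, uw⟩ := h3
    obtain ⟨m, m1, m2, m3⟩ := exists_median hT u v w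
    by_cases e1 : c m = c u
    · exact ⟨_, v, m, w, ⟨m3, by rw [e1]; exact uv.symm, by rw [e1]; exact uw, vw⟩, rfl⟩
    by_cases e2 : c m = c v
    · exact ⟨_, u, m, w, ⟨m2, by rw [e2]; exact uv, by rw [e2]; exact vw, uw⟩, rfl⟩
    exact ⟨_, u, m, v, ⟨m1, fun h => e1 h.symm, e2, uv⟩, rfl⟩
  obtain ⟨n, ⟨x, m, y, hxy, hn⟩, hmin'⟩ : ∃ n, (∃ u m v, Tri T c u m v ∧ T.dist u v = n) ∧
      ∀ k, (∃ u m v, Tri T c u m v ∧ T.dist u v = k) → n ≤ k :=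
    ⟨Nat.find ex, Nat.find_spec ex, fun k hk => Nat.find_min' ex hk⟩
  have hmin : ∀ u m v, Tri T c u m v → n ≤ T.dist u v := fun u m v h => hmin' _ ⟨u, m, v, h, rfl⟩
  have ex2 : ∃ h, ∃ x m y z, Tri T c x m y ∧ T.dist x y = n ∧ c z ≠ c x ∧ c z ≠ c m ∧ c z ≠ c y ∧
      T.dist x z = n + T.dist y z ∧ T.dist y z = h := by
    obtain ⟨z, z1, z2, z3⟩ := h4 (c x) (c m) (c y)
    rcases no_branch hT hc hmin hxy hn z1 z2 z3 with h | h
    · exact ⟨_, x, m, y, z, hxy, hn, z1, z2, z3, h, rfl⟩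
    · exact ⟨_, y, m, x, z, hxy.symm, by rw [T.dist_comm]; exact hn, z3, z2, z1, h, rfl⟩
  clear hxy hn x m y
  obtain ⟨h, ⟨x, m, y, z, hxy, hn, zx, zm, zy, hz, hh⟩, hhmin⟩ :
    ∃ h, (∃ x m y z, Tri T c x m y ∧ T.dist x y = n ∧ c z ≠ c x ∧ c z ≠ c m ∧ c z ≠ c y ∧
      T.dist x z = n + T.dist y z ∧ T.dist y z = h) ∧
      ∀ k, (∃ x m y z, Tri T c x m y ∧ T.dist x y = n ∧ c z ≠ c x ∧ c z ≠ c m ∧ c z ≠ c y ∧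
      T.dist x z = n + T.dist y z ∧ T.dist y z = k) → h ≤ k :=
    ⟨Nat.find ex2, Nat.find_spec ex2, fun k hk => Nat.find_min' ex2 hk⟩
  obtain ⟨Q, q0, qM, hQ⟩ := exists_geo hT x z
  rw [hz, hh] at qM hQ
  have hxy' := hxy
  obtain ⟨t1, t2, t3, t4⟩ := hxy'
  have mpos : 0 < T.dist x m := hT.connected.pos_dist_of_ne (fun e => t2 (by rw [e]))
  have mpos' : 0 < T.dist m y := hT.connected.pos_dist_of_ne (fun e => t3 (by rw [e]))
  have hpos : 0 < T.dist y z := hT.connected.pos_dist_of_ne (fun e => zy (by rw [e]))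
  have qn : Q n = y := by
    have a := hQ 0 n (by omega) (by omega)
    have b := hQ n (n + h) (by omega) (by omega)
    rw [q0] at a
    rw [qM] at b
    exact btw_unique hT (u := x) (v := z) (by omega) (by omega) (by omega)
  have fi : ∀ i, 0 < i → i < n → c (Q i) = c m := by
    intro i hi0 hi
    have a := hQ 0 i (by omega) (by omega)
    have b := hQ i n (by omega) (by omega)
    rw [q0] at a
    rw [qn] at b
    exact interior hT hmin hxy hn (by omega) (by omega) (by omega)
  have ctr : ∀ i j l, i ≤ j → j ≤ l → l ≤ n + h → i + l = 2 * j →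
      c (Q i) = c (Q j) ∨ c (Q j) = c (Q l) ∨ c (Q i) = c (Q l) := by
    intro i j l hi hj hl hs
    apply hc
    rw [hQ i j (by omega) (by omega), hQ j l (by omega) (by omega)]; omega
  -- `n` is odd
  have hodd : ∃ k, n + 1 = 2 * k := by
    rcases Nat.even_or_odd' n with ⟨k, hk | hk⟩
    · exfalso
      have a := ctr 0 k n (by omega) (by omega) (by omega) (by omega)
      rw [q0, qn, fi k (by omega) (by omega)] at a
      grind
    · exact ⟨k + 1, by omega⟩
  obtain ⟨k, hk⟩ := hodd
  have hn3 : 3 ≤ n := by omega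
  have hbig : n < h := by
    by_contra hcon
    have a := ctr (n - h) n (n + h) (by omega) (by omega) (by omega) (by omega)
    by_cases e : h = n
    · rw [e, Nat.sub_self, q0, qn, ← e, show h + h = n + h by omega, qM] at a
      grind
    · rw [fi (n - h) (by omega) (by omega), qn, qM] at a
      grind
  have fn1 : c (Q (n+1)) = c m := by
    have h1 := ctr 0 k (n+1) (by omega) (by omega) (by omega) (by omega)
    have h2 := ctr (n-1) n (n+1) (by omega) (by omega) (by omega) (by omega)
    rw [q0, fi k (by omega) (by omega)] at h1
    rw [fi (n-1) (by omega) (by omega), qn] at h2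
    grind
  have f2n : c (Q (2*n)) = c y := by
    have h1 := ctr 0 n (2*n) (by omega) (by omega) (by omega) (by omega)
    rw [q0, qn] at h1
    by_contra hne
    have h2 : c (Q (2*n)) = c x := by grind
    have a1 := hQ n (n+1) (by omega) (by omega)
    have a2 := hQ (n+1) (2*n) (by omega) (by omega)
    have a3 := hQ n (2*n) (by omega) (by omega)
    have a4 := hQ (2*n) (n+h) (by omega) (by omega)
    rw [qM] at a4
    rw [qn] at a1 a3
    have := hhmin (T.dist (Q (2*n)) z) ⟨y, Q (n+1), Q (2*n), z,
      ⟨by omega, by rw [fn1]; exact t3.symm, by rw [fn1, h2]; exact t2.symm,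
        by rw [h2]; exact t4.symm⟩, by omega, zy, by rw [fn1]; exact zm, by rw [h2]; exact zx,
        by omega, rfl⟩
    omega
  exact hb _ (finale hT hc hQ hn3 hk (by omega) (A := c y) (B := c m) (C := c x) (D := c z)
    t3.symm t4.symm zy.symm t2.symm zm.symm zx.symm (by rw [q0]) fi (by rw [qn]) f2n (by rw [qM]))

theorem stmt_7 {V : Type*} [Fintype V] (T : SimpleGraph V) [DecidableRel T.Adj]
    (hT : T.IsTree) (h : ∀ v : V, ¬ Bijacent T v) :
    aw T 3 ≤ 4 := by
  apply Nat.sInf_le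
  refine ⟨by norm_num, ?_⟩
  intro c hs
  by_contra hno
  refine main_nr hT h (c := c) ?_ ?_ ?_
  · intro u v w huv
    by_contra hcon
    push Not at hcon
    obtain ⟨h1, h2, h3⟩ := hcon
    apply hno
    refine ⟨fun i => if i = 0 then u else if i = 1 then v else w, ⟨T.dist u v, ?_⟩, ?_⟩
    · intro i hi
      have : i = 0 ∨ i = 1 := by omega
      rcases this with rfl | rfl
      · exact ⟨hT.connected _ _, by simp⟩
      · exact ⟨hT.connected _ _, by simp [huv]⟩
    · intro i j hi hj hij
      interval_cases i <;> interval_cases j <;> simp_all [Ne.symm]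
  · obtain ⟨u, hu⟩ := hs 0
    obtain ⟨v, hv⟩ := hs 1
    obtain ⟨w, hw⟩ := hs 2
    exact ⟨u, v, w, by rw [hu, hv]; decide, by rw [hv, hw]; decide, by rw [hu, hw]; decide⟩
  · intro A B C
    have : ∀ A B C : Fin 4, ∃ z, z ≠ A ∧ z ≠ B ∧ z ≠ C := by decide
    obtain ⟨z, hz⟩ := this A B C
    obtain ⟨v, rfl⟩ := hs z
    exact ⟨v, hz⟩

end AntiVDW
end
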